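/- arXiv:1609.03049 — 2 statements merged into one kernel-verified Lean document; each statement's English description precedes it below -/
import Mathlib

section
/- Let M be a 3-connected excluded minor of \overline{BL} having a U_{2,4}-minor. If r*(M) \le 4, then r(M) \le 9. -/
/-! If the rank were at least `10`, contract any element `e₀` of `M`. The contraction `Q` is a
proper minor, so it is a cycle matroid or a bicircular lift matroid of a graph `G`, and its corank
is at most `4`. Since `M` is 3-connected, it has no cocircuit with at most two elements, hence
neither does `Q`, and for any two elements of `Q` some circuit contains the first and avoids the
second. The same then holds for cycles of `G`, so every vertex of `G` has degree at least `3`,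
apart from those carrying just an isolated loop (`low_degree`). A base of `Q` contains at most one
cycle of `G`, which bounds its size by the number of vertices (`exists_cycle`, `hasTwoCycles`);
combined with the handshake identity this gives `r(Q) ≤ 2 r*(Q) ≤ 8` (`edge_bound`,
`base_bound`), whence `r(M) ≤ 9`. -/

open Set Matroid

universe u

namespace BLFormal

/-! ### Matroid preliminaries -/

/-- A circuit of a matroid: a minimal dependent set. -/
def Circuit {α : Type u} (M : Matroid α) (C : Set α) : Prop := Minimal M.Dep C

/-- Deletion of a set of elements from a matroid. -/
def del {α : Type u} (M : Matroid α) (D : Set α) : Matroid α := M ↾ (M.E \ D)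

/-- Contraction of a set of elements of a matroid, defined by duality. -/
def con {α : Type u} (M : Matroid α) (C : Set α) : Matroid α := (del M✶ C)✶

/-- `N` is a minor of `M` if it is obtained by a contraction followed by a deletion. -/
def IsMinor {α : Type u} (N M : Matroid α) : Prop := ∃ C D : Set α, N = del (con M C) D

/-- `N` is a proper (strict) minor of `M`. -/
def IsStrictMinor {α : Type u} (N M : Matroid α) : Prop := IsMinor N M ∧ N ≠ M

/-- The rank of a set `X` in the matroid `M`, as an extended natural number:
the supremum of the cardinalities of the independent subsets of `X`. -/
noncomputable def eRk {α : Type u} (M : Matroid α) (X : Set α) : ℕ∞ :=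
  ⨆ I : {I : Set α // M.Indep I ∧ I ⊆ X}, (I : Set α).encard

/-- The rank `r(M)` of a matroid, as an extended natural number. -/
noncomputable def eRank {α : Type u} (M : Matroid α) : ℕ∞ := eRk M M.E

/-- A loop of a matroid. -/
def MLoop {α : Type u} (M : Matroid α) (e : α) : Prop := M.Dep {e}

/-- A coloop of a matroid: a loop of the dual. -/
def MColoop {α : Type u} (M : Matroid α) (e : α) : Prop := MLoop M✶ e

/-- A `k`-separation of a matroid: a partition `(X, Y)` of the ground set with
`|X|, |Y| ≥ k` and `r(X) + r(Y) - r(M) ≤ k - 1`. -/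
def IsKSep {α : Type u} (M : Matroid α) (k : ℕ) (X Y : Set α) : Prop :=
  X ∪ Y = M.E ∧ Disjoint X Y ∧ (k : ℕ∞) ≤ X.encard ∧ (k : ℕ∞) ≤ Y.encard ∧
    eRk M X + eRk M Y ≤ eRank M + ((k - 1 : ℕ) : ℕ∞)

/-- A matroid is connected if it has no 1-separation. -/
def MConnected {α : Type u} (M : Matroid α) : Prop := ¬ ∃ X Y, IsKSep M 1 X Y

/-- A matroid is 3-connected if it is connected and has no 2-separation. -/
def ThreeConnected {α : Type u} (M : Matroid α) : Prop :=
  MConnected M ∧ ¬ ∃ X Y, IsKSep M 2 X Y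

/-- Two elements of a matroid form a series pair if no circuit contains exactly one
of them, and some circuit contains both. -/
def SeriesPair {α : Type u} (M : Matroid α) (e f : α) : Prop :=
  (∀ C, Circuit M C → (e ∈ C ↔ f ∈ C)) ∧ ∃ C, Circuit M C ∧ e ∈ C ∧ f ∈ C

/-- A series class: a maximal set in which every two elements form a series pair. -/
def IsSeriesClass {α : Type u} (M : Matroid α) (S : Set α) : Prop :=
  Maximal (fun T => T.Nonempty ∧ ∀ e ∈ T, ∀ f ∈ T, SeriesPair M e f) S

/-- `N` is a cosimplification `co(M)` of `M`: it is obtained from `M` by contracting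
all coloops and, in each series class, all but one element. -/
def IsCosimplification {α : Type u} (M N : Matroid α) : Prop :=
  ∃ D ⊆ M.E, N = con M D ∧ (∀ e, MColoop M e → e ∈ D) ∧
    ∀ S, IsSeriesClass M S → ∃ x ∈ S, S \ D = {x}

/-- `M` is isomorphic to the uniform matroid `U_{k, n}`: the ground set has `n` elements
and the circuits are precisely the `(k+1)`-element subsets of the ground set. -/
def IsUnif {α : Type u} (k n : ℕ) (M : Matroid α) : Prop :=
  M.E.encard = n ∧ ∀ C, Circuit M C ↔ C ⊆ M.E ∧ C.encard = k + 1

/-- `M` has a `U_{2,4}`-minor. -/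
def HasU24Minor {α : Type u} (M : Matroid α) : Prop := ∃ N, IsMinor N M ∧ IsUnif 2 4 N

/-- `M` is isomorphic to the direct sum `U_{2,4} ⊕ U_{0,1}` of `U_{2,4}` and a loop:
its ground set consists of a 4-element set `X` together with one further element `l`,
and its circuits are `{l}` and the 3-element subsets of `X`. -/
def IsU24PlusLoop {α : Type u} (M : Matroid α) : Prop :=
  ∃ (X : Set α) (l : α), l ∉ X ∧ M.E = insert l X ∧ X.encard = 4 ∧
    ∀ C, Circuit M C ↔ (C = {l} ∨ (C ⊆ X ∧ C.encard = 3))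

/-- `M` is isomorphic to the Fano matroid `F₇`: the rank-3 matroid represented over
`GF(2)` by the seven nonzero vectors of `GF(2)³`. -/
def IsFano {α : Type u} (M : Matroid α) : Prop :=
  ∃ v : α → (Fin 3 → ZMod 2),
    Set.BijOn v M.E {w | w ≠ 0} ∧
    ∀ I ⊆ M.E, (M.Indep I ↔ LinearIndependent (ZMod 2) (fun x : I => v x))

/-! ### Graphs (with loops and parallel edges allowed) -/

/-- A graph on vertex type `V`, with edge set `E` living in the ambient edge type `α`;
each edge is sent to the unordered pair of its end-vertices. -/
structure Graph (V : Type u) (α : Type u) where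
  E : Set α
  inc : α → Sym2 V

namespace Graph

variable {V : Type u} {α : Type u}

/-- The vertices incident with an edge set `C`. -/
def vertsOf (G : Graph V α) (C : Set α) : Set V := {v | ∃ e ∈ C, v ∈ G.inc e}

/-- The vertex set of a graph (we consider graphs without isolated vertices). -/
def verts (G : Graph V α) : Set V := G.vertsOf G.E

/-- Deletion of a set of edges from a graph. -/
def delete (G : Graph V α) (D : Set α) : Graph V α := ⟨G.E \ D, G.inc⟩

/-- The degree of a vertex `v` in the edge set `C`, with loops counting twice. -/
noncomputable def deg (G : Graph V α) (C : Set α) (v : V) : ℕ :=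
  {e ∈ C | v ∈ G.inc e}.ncard + {e ∈ C | G.inc e = Sym2.diag v}.ncard

/-- Two vertices are adjacent via an edge of `C`. -/
def AdjOn (G : Graph V α) (C : Set α) (u v : V) : Prop := ∃ e ∈ C, G.inc e = s(u, v)

/-- The subgraph with edge set `C` is connected. -/
def ConnectedOn (G : Graph V α) (C : Set α) : Prop :=
  ∀ u ∈ G.vertsOf C, ∀ v ∈ G.vertsOf C, Relation.ReflTransGen (G.AdjOn C) u v

/-- `C` is a cycle of `G` : the edge set of a connected 2-regular subgraph. -/
def IsCycle (G : Graph V α) (C : Set α) : Prop :=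
  C ⊆ G.E ∧ C.Finite ∧ C.Nonempty ∧ (∀ v ∈ G.vertsOf C, G.deg C v = 2) ∧ G.ConnectedOn C

/-- A graph is 2-edge-connected if each of its edges lies in a cycle. -/
def TwoEdgeConnected (G : Graph V α) : Prop := ∀ e ∈ G.E, ∃ C, G.IsCycle C ∧ e ∈ C

/-- A graph is connected if it has at least one vertex and any two of its
vertices are joined by a path. -/
def Connected (G : Graph V α) : Prop := G.verts.Nonempty ∧ G.ConnectedOn G.E

/-- Delete a vertex from a graph (removing all edges incident with it). -/
def delVert (G : Graph V α) (v : V) : Graph V α := ⟨{e ∈ G.E | v ∉ G.inc e}, G.inc⟩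

/-- A graph is 2-connected if it is connected and stays connected after the
deletion of any vertex. -/
def TwoConnected (G : Graph V α) : Prop :=
  G.Connected ∧ ∀ v ∈ G.verts, (G.delVert v).Connected

/-- `X` contains at least two (distinct) cycles of `G`. -/
def HasTwoCycles (G : Graph V α) (X : Set α) : Prop :=
  ∃ C₁ C₂, G.IsCycle C₁ ∧ G.IsCycle C₂ ∧ C₁ ≠ C₂ ∧ C₁ ⊆ X ∧ C₂ ⊆ X

/-- The circuits of the bicircular lift matroid of `G`: edge sets containing at
least two cycles and minimal with this property. -/
def LiftCircuit (G : Graph V α) (X : Set α) : Prop :=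
  Minimal (fun Y => Y ⊆ G.E ∧ G.HasTwoCycles Y) X

/-- Two edges of a graph form a series pair if no cycle contains exactly one of
them, and some cycle contains both. -/
def SeriesPair (G : Graph V α) (e f : α) : Prop :=
  (∀ C, G.IsCycle C → (e ∈ C ↔ f ∈ C)) ∧ ∃ C, G.IsCycle C ∧ e ∈ C ∧ f ∈ C

end Graph

/-- `N` is the bicircular lift matroid `L(G)` of `G` : its ground set is `E(G)`
and its circuits are the lift circuits of `G`. -/
def IsLiftRep {V α : Type u} (G : Graph V α) (N : Matroid α) : Prop :=
  N.E = G.E ∧ ∀ C, Circuit N C ↔ G.LiftCircuit C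

/-- `N` is the cycle matroid `M(G)` of `G` : its ground set is `E(G)` and its
circuits are the cycles of `G`. -/
def IsGraphicRep {V α : Type u} (G : Graph V α) (N : Matroid α) : Prop :=
  N.E = G.E ∧ ∀ C, Circuit N C ↔ G.IsCycle C

/-- A matroid is bicircular lift if it is (isomorphic to) `L(G)` for some graph `G`. -/
def IsBicircularLift {α : Type u} (N : Matroid α) : Prop :=
  ∃ (V : Type u) (G : Graph V α), IsLiftRep G N

/-- A matroid is graphic if it is (isomorphic to) the cycle matroid of some graph. -/
def IsGraphic {α : Type u} (N : Matroid α) : Prop :=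
  ∃ (V : Type u) (G : Graph V α), IsGraphicRep G N

/-- The class `BL-bar` of matroids that are graphic or bicircular lift. -/
def InBL {α : Type u} (N : Matroid α) : Prop := IsGraphic N ∨ IsBicircularLift N

/-- `M` is an excluded minor for the class `BL-bar`. -/
def ExcludedMinorBL {α : Type u} (M : Matroid α) : Prop :=
  ¬ InBL M ∧ ∀ N, IsStrictMinor N M → InBL N

/-! ### Special graphs and subdivisions -/

/-- `G` is (a copy of) the complete graph `K₄`. -/
def IsK4 {V α : Type u} (G : Graph V α) : Prop :=
  ∃ v : Fin 4 → V, Function.Injective v ∧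
    ∃ ed : {p : Sym2 (Fin 4) // ¬ p.IsDiag} → α, Function.Injective ed ∧
      G.E = Set.range ed ∧ ∀ p, G.inc (ed p) = Sym2.map v p.1

/-- `G` is (a copy of) the complete graph `K₅`. -/
def IsK5 {V α : Type u} (G : Graph V α) : Prop :=
  ∃ v : Fin 5 → V, Function.Injective v ∧
    ∃ ed : {p : Sym2 (Fin 5) // ¬ p.IsDiag} → α, Function.Injective ed ∧
      G.E = Set.range ed ∧ ∀ p, G.inc (ed p) = Sym2.map v p.1

/-- `G` is (a copy of) the complete bipartite graph `K₃,₃`. -/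
def IsK33 {V α : Type u} (G : Graph V α) : Prop :=
  ∃ a b : Fin 3 → V, Function.Injective a ∧ Function.Injective b ∧
    Set.range a ∩ Set.range b = ∅ ∧
    ∃ ed : Fin 3 × Fin 3 → α, Function.Injective ed ∧
      G.E = Set.range ed ∧ ∀ p, G.inc (ed p) = s(a p.1, b p.2)

/-- `G` is (a copy of) the graph `K₂ⁿ` with two vertices joined by `n` parallel edges. -/
def IsK2n {V α : Type u} (n : ℕ) (G : Graph V α) : Prop :=
  ∃ u v : V, u ≠ v ∧ ∃ ed : Fin n → α, Function.Injective ed ∧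
    G.E = Set.range ed ∧ ∀ i, G.inc (ed i) = s(u, v)

/-- `H` is obtained from `G` by subdividing a single edge. -/
def ElemSub {V α : Type u} (G H : Graph V α) : Prop :=
  ∃ e ∈ G.E, ∃ (f g : α) (u v w : V),
    G.inc e = s(u, v) ∧ w ∉ G.verts ∧ f ≠ g ∧
    f ∉ G.E \ {e} ∧ g ∉ G.E \ {e} ∧
    H.E = (G.E \ {e}) ∪ {f, g} ∧
    H.inc f = s(u, w) ∧ H.inc g = s(w, v) ∧
    ∀ x ∈ G.E \ {e}, H.inc x = G.inc x

/-- `H` is a subdivision of `G` : it is obtained from `G` by repeatedly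
subdividing edges. -/
def IsSubdivision {V α : Type u} (G H : Graph V α) : Prop :=
  Relation.ReflTransGen ElemSub G H

/-! ### 2-sums and simplification -/

/-- `N` is the 2-sum `N₁ ⊕₂ᵉ N₂` of `N₁` and `N₂` along `e`. -/
def Is2Sum {α : Type u} (N N₁ N₂ : Matroid α) (e : α) : Prop :=
  N₁.E ∩ N₂.E = {e} ∧
  ¬ MLoop N₁ e ∧ ¬ MColoop N₁ e ∧ ¬ MLoop N₂ e ∧ ¬ MColoop N₂ e ∧
  N.E = (N₁.E ∪ N₂.E) \ {e} ∧
  ∀ C, Circuit N C ↔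
    ((Circuit N₁ C ∧ e ∉ C) ∨ (Circuit N₂ C ∧ e ∉ C) ∨
      ∃ C₁ C₂, Circuit N₁ C₁ ∧ Circuit N₂ C₂ ∧ e ∈ C₁ ∧ e ∈ C₂ ∧
        C = (C₁ \ {e}) ∪ (C₂ \ {e}))

/-- `H` is a simplification `si(G)` of `G` : it is obtained from `G` by deleting all
loops and all but one edge of each parallel class. -/
def IsSimplification {V α : Type u} (G H : Graph V α) : Prop :=
  H.inc = G.inc ∧ H.E ⊆ G.E ∧ (∀ e ∈ H.E, ¬ (G.inc e).IsDiag) ∧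
    ∀ e ∈ G.E, ¬ (G.inc e).IsDiag → ∃! f, f ∈ H.E ∧ G.inc f = G.inc e

/-- `H` is 2-connected, or is obtained from a 2-connected graph and a single edge `K₂`
by identifying one end-vertex of the edge with a vertex of the 2-connected graph. -/
def TwoConnOrPendant {V α : Type u} (H : Graph V α) : Prop :=
  H.TwoConnected ∨
    ∃ (e : α) (u w : V), e ∈ H.E ∧ H.inc e = s(u, w) ∧ u ≠ w ∧
      (H.delete {e}).TwoConnected ∧ u ∈ (H.delete {e}).verts ∧ w ∉ (H.delete {e}).verts

/-! ### Handshake counts -/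

section counting

open Classical in
/-- The contribution (`0`, `1`, or `2` for a loop) of the edge `e` to the degree of `v`. -/
private noncomputable def Graph.ends {V α : Type u} (G : Graph V α) (e : α) (v : V) : ℕ :=
  (if v ∈ G.inc e then 1 else 0) + (if G.inc e = Sym2.diag v then 1 else 0)

variable {V α : Type u} (G : Graph V α)

private lemma deg_eq_sum (X : Finset α) (v : V) : G.deg (X : Set α) v = ∑ e ∈ X, G.ends e v := by
  classical
  have key : ∀ p : α → Prop, {e ∈ (X : Set α) | p e}.ncard = ∑ e ∈ X, if p e then 1 else 0 := by
    intro p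
    rw [← Finset.card_filter, ← Set.ncard_coe_finset]
    congr 1
    ext e
    simp
  simp only [Graph.deg, Graph.ends, Finset.sum_add_distrib]
  rw [key, key]
  congr 1 <;> exact Finset.sum_congr rfl fun _ _ => by congr

private lemma sum_ends (e : α) (S : Finset V) (hS : ∀ v ∈ G.inc e, v ∈ S) :
    ∑ v ∈ S, G.ends e v = 2 := by
  classical
  simp only [Graph.ends, Finset.sum_add_distrib]
  rw [← Finset.card_filter, ← Finset.card_filter]
  obtain ⟨⟨a, b⟩, h⟩ : ∃ p : V × V, G.inc e = s(p.1, p.2) := by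
    induction h : G.inc e with
    | _ a b => exact ⟨(a, b), rfl⟩
  simp only at h
  have ha : a ∈ S := hS a (by simp [h])
  have hb : b ∈ S := hS b (by simp [h])
  have h1 : S.filter (fun v => v ∈ G.inc e) = {a, b} := by
    ext v
    simp only [h, Finset.mem_filter, Sym2.mem_iff, Finset.mem_insert, Finset.mem_singleton]
    constructor
    · exact fun h => h.2
    · rintro (rfl | rfl) <;> simp [*]
  rw [h1]
  by_cases hab : a = b
  · subst hab
    have h2 : S.filter (fun v => G.inc e = Sym2.diag v) = {a} := by
      ext v
      simp only [h, Finset.mem_filter, Finset.mem_singleton, Sym2.diag, Sym2.eq_iff]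
      constructor
      · rintro ⟨_, h⟩
        tauto
      · rintro rfl
        simp [*]
    simp [h2]
  · have h2 : S.filter (fun v => G.inc e = Sym2.diag v) = ∅ := by
      ext v
      simp only [h, Finset.mem_filter, Sym2.diag, Sym2.eq_iff, Finset.notMem_empty, iff_false]
      rintro ⟨_, h⟩
      apply hab
      rcases h with ⟨rfl, rfl⟩ | ⟨rfl, rfl⟩ <;> rfl
    simp [h2, Finset.card_pair hab]

private lemma ends_pos {e : α} {v : V} (h : v ∈ G.inc e) : 1 ≤ G.ends e v := by
  simp [Graph.ends, h]

private lemma ends_eq_zero {e : α} {v : V} (h : v ∉ G.inc e) : G.ends e v = 0 := by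
  have : G.inc e ≠ Sym2.diag v := fun h' => h (by simp [h', Sym2.diag])
  simp [Graph.ends, h, this]

private lemma mem_vertsOf {X : Set α} {e : α} {v : V} (he : e ∈ X) (hv : v ∈ G.inc e) :
    v ∈ G.vertsOf X := ⟨e, he, hv⟩

private lemma vertsOf_mono {X Y : Set α} (h : X ⊆ Y) : G.vertsOf X ⊆ G.vertsOf Y :=
  fun _ ⟨e, he, hv⟩ => ⟨e, h he, hv⟩

private lemma vertsOf_finite {X : Set α} (hX : X.Finite) : (G.vertsOf X).Finite := by
  have : G.vertsOf X = ⋃ e ∈ X, {v | v ∈ G.inc e} := by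
    ext v
    simp [Graph.vertsOf]
  rw [this]
  refine hX.biUnion fun e _ => ?_
  induction h : G.inc e with
  | _ a b =>
    refine (Set.toFinite {a, b}).subset fun v hv => ?_
    simpa using hv

/-- The handshake identity, over any finite vertex set containing all ends of `X`. -/
private lemma sum_deg (X : Finset α) (S : Finset V) (hS : G.vertsOf (X : Set α) ⊆ S) :
    ∑ v ∈ S, G.deg (X : Set α) v = 2 * X.card := by
  simp only [deg_eq_sum]
  rw [Finset.sum_comm, Finset.sum_congr rfl
    (fun e he => sum_ends G e S fun v hv => hS (mem_vertsOf G (by exact_mod_cast he) hv))]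
  simp [mul_comm]

/-! ### Edge sets with many edges contain cycles -/

/-- A nonempty edge set minimal subject to having at least as many edges as vertices
is a cycle. -/
private lemma isCycle_of_minimal (X : Finset α) (hXE : (X : Set α) ⊆ G.E) (hne : X.Nonempty)
    (hc : (G.vertsOf (X : Set α)).ncard ≤ X.card)
    (hmin : ∀ Y ⊂ X, Y.Nonempty → Y.card < (G.vertsOf (Y : Set α)).ncard) :
    G.IsCycle (X : Set α) := by
  classical
  have hVfin := vertsOf_finite G X.finite_toSet
  obtain ⟨S, hS⟩ := hVfin.exists_finset_coe
  rw [← hS, Set.ncard_coe_finset] at hc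
  have hVY : ∀ Y ⊆ X, G.vertsOf (Y : Set α) ⊆ S := fun Y hY =>
    (vertsOf_mono G (by exact_mod_cast hY)).trans hS.ge
  have hmin' : ∀ Y ⊂ X, Y.Nonempty → ∀ T : Finset V, G.vertsOf (Y : Set α) ⊆ T →
      Y.card < T.card := by
    intro Y hY hYn T hT
    refine (hmin Y hY hYn).trans_le ?_
    rw [← Set.ncard_coe_finset]
    exact Set.ncard_le_ncard hT
  have hsum := sum_deg G X S hS.ge
  have hdeg2 : ∀ v ∈ S, 2 ≤ G.deg (X : Set α) v := by
    intro v hv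
    obtain ⟨e, he, hve⟩ : v ∈ G.vertsOf (X : Set α) := hS ▸ (by exact_mod_cast hv)
    have he : e ∈ X := by exact_mod_cast he
    by_contra hlt
    rw [deg_eq_sum, ← Finset.add_sum_erase _ _ he] at hlt
    have h1 := ends_pos G hve
    have h0 : ∀ f ∈ X.erase e, v ∉ G.inc f := by
      intro f hf hvf
      have h2 := ends_pos G hvf
      have h3 := Finset.single_le_sum (f := fun f => G.ends f v) (fun _ _ => Nat.zero_le _) hf
      omega
    have hVs : G.vertsOf (X.erase e : Set α) ⊆ (S.erase v : Finset V) := by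
      rintro w ⟨f, hf, hw⟩
      have hf' : f ∈ X.erase e := by exact_mod_cast hf
      have : w ∈ S := by
        exact_mod_cast hVY (X.erase e) (Finset.erase_subset _ _) (mem_vertsOf G hf hw)
      have : w ∈ S.erase v := Finset.mem_erase.2 ⟨by rintro rfl; exact h0 f hf' hw, this⟩
      exact_mod_cast this
    rcases (X.erase e).eq_empty_or_nonempty with h | h
    · -- `X` is the single edge `e`, which must be a loop at `v`
      have hX1 : X.card = 1 := by
        have := Finset.card_erase_add_one he
        rw [h] at this
        simpa using this.symm
      have hSv : S = {v} := by
        apply Eq.symm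
        apply Finset.eq_of_subset_of_card_le
        · simpa using hv
        · simpa using hc.trans hX1.le
      rw [hSv, Finset.sum_singleton, deg_eq_sum, ← Finset.add_sum_erase _ _ he] at hsum
      omega
    · have := hmin' _ (Finset.erase_ssubset he) h _ hVs
      rw [Finset.card_erase_of_mem he, Finset.card_erase_of_mem hv] at this
      omega
  have hcard : X.card ≤ S.card := by
    by_contra hlt
    obtain ⟨e, he⟩ := hne
    have hSpos : S.Nonempty := by
      obtain ⟨v, hv⟩ : ∃ v, v ∈ G.inc e := ⟨_, Sym2.out_fst_mem _⟩
      have : v ∈ G.vertsOf (X : Set α) := mem_vertsOf G (by exact_mod_cast he) hv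
      rw [← hS] at this
      exact ⟨v, by exact_mod_cast this⟩
    have h1 := hSpos.card_pos
    have h2 := Finset.card_erase_of_mem he
    have := hmin' (X.erase e) (Finset.erase_ssubset he) (Finset.card_pos.1 (by omega)) S
      (hVY _ (Finset.erase_subset _ _))
    omega
  have hdeg : ∀ v ∈ S, G.deg (X : Set α) v = 2 := by
    have h2 : ∑ v ∈ S, 2 = ∑ v ∈ S, G.deg (X : Set α) v := by
      rw [hsum, Finset.sum_const, smul_eq_mul]
      omega
    exact fun v hv => ((Finset.sum_eq_sum_iff_of_le hdeg2).1 h2 v hv).symm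
  refine ⟨hXE, X.finite_toSet, by exact_mod_cast hne, ?_, ?_⟩
  · intro v hv
    rw [← hS] at hv
    exact hdeg v (by exact_mod_cast hv)
  · intro u hu v hv
    by_contra hnot
    -- split `X` along the component `R` of `u`
    let R : Set V := {w | Relation.ReflTransGen (G.AdjOn (X : Set α)) u w}
    have hR : ∀ f ∈ X, ∀ a ∈ G.inc f, ∀ b ∈ G.inc f, a ∈ R → b ∈ R := by
      intro f hf a ha b hb haR
      by_cases hab : a = b
      · exact hab ▸ haR
      · exact Relation.ReflTransGen.tail haR
          ⟨f, by exact_mod_cast hf, (Sym2.mem_and_mem_iff hab).1 ⟨ha, hb⟩⟩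
    let X₁ := X.filter (fun f => ∃ a ∈ G.inc f, a ∈ R)
    let X₂ := X.filter (fun f => ¬ ∃ a ∈ G.inc f, a ∈ R)
    have hX12 : X₁.card + X₂.card = X.card := Finset.card_filter_add_card_filter_not _
    have hn1 : X₁.Nonempty := by
      obtain ⟨f, hf, huf⟩ := hu
      exact ⟨f, Finset.mem_filter.2 ⟨by exact_mod_cast hf, u, huf, Relation.ReflTransGen.refl⟩⟩
    have hn2 : X₂.Nonempty := by
      obtain ⟨f, hf, hvf⟩ := hv
      refine ⟨f, Finset.mem_filter.2 ⟨by exact_mod_cast hf, ?_⟩⟩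
      rintro ⟨a, ha, haR⟩
      exact hnot (hR f (by exact_mod_cast hf) a ha v hvf haR)
    have hs1 : X₁ ⊂ X := by
      refine (Finset.filter_subset _ _).ssubset_of_ne fun h => ?_
      have := hn2.card_pos
      have h : X₁.card = X.card := congrArg Finset.card h
      omega
    have hs2 : X₂ ⊂ X := by
      refine (Finset.filter_subset _ _).ssubset_of_ne fun h => ?_
      have := hn1.card_pos
      have h : X₂.card = X.card := congrArg Finset.card h
      omega
    have h1 := hmin' X₁ hs1 hn1 (S.filter (· ∈ R)) (by
      rintro w ⟨f, hf, hw⟩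
      have hwS := hVY X₁ hs1.1 (mem_vertsOf G hf hw)
      have hf : f ∈ X₁ := by exact_mod_cast hf
      obtain ⟨hfX, a, ha, haR⟩ := Finset.mem_filter.1 hf
      have : w ∈ S.filter (· ∈ R) :=
        Finset.mem_filter.2 ⟨by exact_mod_cast hwS, hR f hfX a ha w hw haR⟩
      exact_mod_cast this)
    have h2 := hmin' X₂ hs2 hn2 (S.filter (¬ · ∈ R)) (by
      rintro w ⟨f, hf, hw⟩
      have hwS := hVY X₂ hs2.1 (mem_vertsOf G hf hw)
      have hf : f ∈ X₂ := by exact_mod_cast hf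
      obtain ⟨hfX, hnR⟩ := Finset.mem_filter.1 hf
      have : w ∈ S.filter (¬ · ∈ R) :=
        Finset.mem_filter.2 ⟨by exact_mod_cast hwS, fun hwR => hnR ⟨w, hw, hwR⟩⟩
      exact_mod_cast this)
    have := Finset.card_filter_add_card_filter_not (s := S) (· ∈ R)
    omega

private lemma exists_cycle (X : Finset α) (hXE : (X : Set α) ⊆ G.E) (hne : X.Nonempty)
    (hc : (G.vertsOf (X : Set α)).ncard ≤ X.card) : ∃ C ⊆ (X : Set α), G.IsCycle C := by
  classical
  induction X using Finset.strongInduction with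
  | _ X ih =>
    by_cases h : ∃ Y ⊂ X, Y.Nonempty ∧ (G.vertsOf (Y : Set α)).ncard ≤ Y.card
    · obtain ⟨Y, hY, hYn, hYc⟩ := h
      have hYX : (Y : Set α) ⊆ X := by exact_mod_cast hY.1
      obtain ⟨C, hC, hcyc⟩ := ih Y hY (hYX.trans hXE) hYn hYc
      exact ⟨C, hC.trans hYX, hcyc⟩
    · push Not at h
      exact ⟨X, subset_rfl, isCycle_of_minimal G X hXE hne hc h⟩

private lemma hasTwoCycles (X : Finset α) (hXE : (X : Set α) ⊆ G.E)
    (hc : (G.vertsOf (X : Set α)).ncard < X.card) : G.HasTwoCycles (X : Set α) := by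
  classical
  have hne : X.Nonempty := Finset.card_pos.1 (by omega)
  obtain ⟨C, hCX, hC⟩ := exists_cycle G X hXE hne hc.le
  obtain ⟨e, he⟩ := hC.2.2.1
  have heX : e ∈ X := by exact_mod_cast hCX he
  have hsub : ((X.erase e : Finset α) : Set α) ⊆ X := by exact_mod_cast Finset.erase_subset _ _
  have hle := Set.ncard_le_ncard (vertsOf_mono G hsub) (vertsOf_finite G X.finite_toSet)
  have hce := Finset.card_erase_of_mem heX
  have hpos : 0 < (G.vertsOf (X : Set α)).ncard := by
    rw [Set.ncard_pos (vertsOf_finite G X.finite_toSet)]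
    exact ⟨_, mem_vertsOf G (by exact_mod_cast heX) (Sym2.out_fst_mem _)⟩
  obtain ⟨C', hC'X, hC'⟩ := exists_cycle G (X.erase e) (hsub.trans hXE)
    (Finset.card_pos.1 (by omega)) (by omega)
  refine ⟨C, C', hC, hC', ?_, hCX, hC'X.trans hsub⟩
  rintro rfl
  have := hC'X he
  simp at this

/-! ### The edge bound -/

/-- If any edge can be separated from any other by a cycle, then a vertex of degree at most `2`
carries a single edge, which is a loop. -/
private lemma low_degree (X : Finset α) (hX : (X : Set α) = G.E)
    (hsep : ∀ e ∈ G.E, ∀ f ∈ G.E, e ≠ f → ∃ C, G.IsCycle C ∧ e ∈ C ∧ f ∉ C)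
    (hcyc : ∀ e ∈ G.E, ∃ C, G.IsCycle C ∧ e ∈ C)
    {v : V} {e : α} (he : e ∈ G.E) (hv : v ∈ G.inc e) :
    2 ≤ G.deg G.E v ∧ (G.deg G.E v ≤ 2 → G.inc e = Sym2.diag v ∧
      ∀ f ∈ G.E, v ∈ G.inc f → f = e) := by
  classical
  have hC : ∀ C, G.IsCycle C → e ∈ C → ∀ f ∈ G.E, f ∉ C →
      2 + G.ends f v ≤ G.deg G.E v := by
    intro C hC heC f hf hfC
    obtain ⟨Y, rfl⟩ := hC.2.1.exists_finset_coe
    have h2 := hC.2.2.2.1 v (mem_vertsOf G heC hv)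
    rw [← h2, ← hX, deg_eq_sum, deg_eq_sum, add_comm]
    rw [← Finset.sum_insert (f := fun e => G.ends e v) (show f ∉ Y by exact_mod_cast hfC)]
    apply Finset.sum_le_sum_of_subset
    have hYX : (Y : Set α) ⊆ X := hX ▸ hC.1
    rw [← hX] at hf
    exact Finset.insert_subset (by exact_mod_cast hf) (by exact_mod_cast hYX)
  have h2 : 2 ≤ G.deg G.E v := by
    obtain ⟨C, hCc, heC⟩ := hcyc e he
    obtain ⟨Y, rfl⟩ := hCc.2.1.exists_finset_coe
    have h2 := hCc.2.2.2.1 v (mem_vertsOf G heC hv)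
    have hYX : (Y : Set α) ⊆ X := hX ▸ hCc.1
    rw [← h2, ← hX, deg_eq_sum, deg_eq_sum]
    exact Finset.sum_le_sum_of_subset (by exact_mod_cast hYX)
  refine ⟨h2, fun hle => ?_⟩
  have huniq : ∀ f ∈ G.E, v ∈ G.inc f → f = e := by
    intro f hf hvf
    by_contra hne
    obtain ⟨C, hCc, heC, hfC⟩ := hsep e he f hf (Ne.symm hne)
    have := hC C hCc heC f hf hfC
    have := ends_pos G hvf
    omega
  refine ⟨?_, huniq⟩
  by_contra hnd
  rw [← hX, deg_eq_sum, Finset.sum_eq_single e] at h2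
  · simp [Graph.ends, hv, hnd] at h2
  · intro f hf hne
    exact ends_eq_zero G fun hvf => hne (huniq f (hX ▸ (by exact_mod_cast hf)) hvf)
  · intro h
    exact absurd (by exact_mod_cast hX ▸ he) h

/-- In a finite graph in which any two edges are separated by a cycle, an edge set `B` with at
least two edges and at most one cycle has at most twice as many edges as its complement. The vertices of degree at most
`2` carry isolated loops; let `W` be the set of the others. The handshake identity gives
`2 |E| ≥ 3 |W|`. Moreover `|W| ≥ |B|`: if `B` avoids the isolated loops, this holds because `B` has
at most one cycle; otherwise `B` consists of one isolated loop and a nonempty forest on `W`. -/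
private lemma edge_bound (hfin : G.E.Finite)
    (hsep : ∀ e ∈ G.E, ∀ f ∈ G.E, e ≠ f → ∃ C, G.IsCycle C ∧ e ∈ C ∧ f ∉ C)
    (B : Set α) (hB : B ⊆ G.E) (hB2 : ¬ G.HasTwoCycles B) (h2 : 2 ≤ B.ncard) :
    B.ncard ≤ 2 * (G.E \ B).ncard := by
  classical
  obtain ⟨X, hX⟩ := hfin.exists_finset_coe
  obtain ⟨Y, rfl⟩ := (hfin.subset hB).exists_finset_coe
  rw [Set.ncard_coe_finset] at h2 ⊢
  have hYX : Y ⊆ X := by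
    rw [← hX] at hB
    exact_mod_cast hB
  have hdiff : (G.E \ (Y : Set α)).ncard + Y.card = X.card := by
    rw [← hX, ← Finset.coe_sdiff, Set.ncard_coe_finset]
    exact Finset.card_sdiff_add_card_eq_card hYX
  have hcyc : ∀ e ∈ G.E, ∃ C, G.IsCycle C ∧ e ∈ C := by
    intro e he
    obtain ⟨f, hf, hne⟩ := Finset.exists_mem_ne (show 1 < Y.card by omega) e
    obtain ⟨C, hC, heC, -⟩ := hsep e he f (hB (by exact_mod_cast hf)) (Ne.symm hne)
    exact ⟨C, hC, heC⟩
  have hlow := fun {v : V} {e : α} => low_degree G X hX hsep hcyc (v := v) (e := e)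
  obtain ⟨S, hS⟩ := (vertsOf_finite G hfin).exists_finset_coe
  have hsum := sum_deg G X S (by rw [hX, hS])
  rw [hX] at hsum
  let W := S.filter (fun v => 3 ≤ G.deg G.E v)
  have hW3 : 3 * W.card ≤ ∑ v ∈ W, G.deg G.E v := by
    rw [mul_comm, ← smul_eq_mul]
    exact Finset.card_nsmul_le_sum _ _ _ fun v hv => (Finset.mem_filter.1 hv).2
  have hWle : ∑ v ∈ W, G.deg G.E v ≤ 2 * X.card :=
    hsum ▸ Finset.sum_le_sum_of_subset (Finset.filter_subset _ _)
  suffices hWY : Y.card ≤ W.card by omega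
  by_contra hlt
  have hWsub : ∀ Z ⊆ Y, (∀ e ∈ Z, ∀ v ∈ G.inc e, 3 ≤ G.deg G.E v) →
      (G.vertsOf (Z : Set α)).ncard ≤ W.card := by
    intro Z hZ h3
    rw [← Set.ncard_coe_finset]
    refine Set.ncard_le_ncard ?_
    rintro v ⟨e, he, hv⟩
    have he : e ∈ Z := by exact_mod_cast he
    have hvS : v ∈ S := by
      have : v ∈ (S : Set V) := hS ▸ mem_vertsOf G (hB (by exact_mod_cast hZ he)) hv
      exact_mod_cast this
    exact_mod_cast Finset.mem_filter.2 ⟨hvS, h3 e he v hv⟩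
  by_cases h3 : ∀ e ∈ Y, ∀ v ∈ G.inc e, 3 ≤ G.deg G.E v
  · have := hWsub Y subset_rfl h3
    exact hB2 (hasTwoCycles G Y hB (by omega))
  push Not at h3
  -- `B` contains an isolated loop `l`
  obtain ⟨l, hl, v, hv, hd⟩ := h3
  have hloop : ∀ l ∈ Y, ∀ v ∈ G.inc l, G.deg G.E v < 3 →
      ∃ C, G.IsCycle C ∧ C = {l} := by
    intro l hl v hv hd
    have hlE : l ∈ G.E := hB (by exact_mod_cast hl)
    obtain ⟨hdiag, -⟩ := (hlow hlE hv).2 (by omega)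
    obtain ⟨C, hC, hCc⟩ := exists_cycle G {l} (by simpa using hlE) (by simp) (by
      have : G.vertsOf (({l} : Finset α) : Set α) = {v} := by
        ext w
        simp [Graph.vertsOf, hdiag, Sym2.diag]
      rw [this]
      simp)
    refine ⟨C, hCc, ?_⟩
    rw [Finset.coe_singleton] at hC
    exact (Set.subset_singleton_iff_eq.1 hC).resolve_left hCc.2.2.1.ne_empty
  obtain ⟨_, hlc, rfl⟩ := hloop l hl v hv hd
  have hlY : ({l} : Set α) ⊆ (Y : Set α) := by simpa using hl
  have hsubY : ((Y.erase l : Finset α) : Set α) ⊆ Y := by exact_mod_cast Finset.erase_subset _ _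
  have h3' : ∀ e ∈ Y.erase l, ∀ v ∈ G.inc e, 3 ≤ G.deg G.E v := by
    intro e he w hw
    by_contra hd'
    obtain ⟨hel, heY⟩ := Finset.mem_erase.1 he
    obtain ⟨_, hec, rfl⟩ := hloop e heY w hw (by omega)
    exact hB2 ⟨{l}, {e}, hlc, hec, by simpa using Ne.symm hel, hlY, by simpa using heY⟩
  have hWe := hWsub _ (Finset.erase_subset _ _) h3'
  have hce := Finset.card_erase_of_mem hl
  obtain ⟨C, hCY, hC⟩ := exists_cycle G (Y.erase l) (hsubY.trans hB)
    (Finset.card_pos.1 (by omega)) (by omega)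
  refine hB2 ⟨{l}, C, hlc, hC, ?_, hlY, hCY.trans hsubY⟩
  rintro rfl
  have := hCY (Set.mem_singleton l)
  simp at this

end counting

/-! ### Representations by graphs -/

/-- For a finite matroid `Q` in the class in which any two elements are separated by a circuit,
an independent set `B` with at least two elements is at most twice as large as its complement.
Every circuit is a cycle or the union of two cycles, and an independent set contains at most one
cycle, so the graph bound applies. -/
private lemma base_bound {α : Type u} (Q : Matroid α) (hfin : Q.E.Finite) (hQ : InBL Q)
    (hsep : ∀ e ∈ Q.E, ∀ f ∈ Q.E, e ≠ f → ∃ C, Q.IsCircuit C ∧ e ∈ C ∧ f ∉ C)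
    (B : Set α) (hB : Q.Indep B) (h2 : 2 ≤ B.ncard) : B.ncard ≤ 2 * (Q.E \ B).ncard := by
  rcases hQ with ⟨V, G, hE, hG⟩ | ⟨V, G, hE, hG⟩
  · rw [hE]
    refine edge_bound G (hE ▸ hfin) ?_ B (hE ▸ hB.subset_ground) ?_ h2
    · intro e he f hf hne
      obtain ⟨C, hC, heC, hfC⟩ := hsep e (hE ▸ he) f (hE ▸ hf) hne
      exact ⟨C, (hG C).1 hC, heC, hfC⟩
    · rintro ⟨C, -, hC, -, -, hCB, -⟩
      have hCd : Q.IsCircuit C := (hG C).2 hC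
      exact hCd.not_indep (hB.subset hCB)
  · rw [hE]
    refine edge_bound G (hE ▸ hfin) ?_ B (hE ▸ hB.subset_ground) ?_ h2
    · intro e he f hf hne
      obtain ⟨Z, hZ, heZ, hfZ⟩ := hsep e (hE ▸ he) f (hE ▸ hf) hne
      have hZ' : G.LiftCircuit Z := (hG Z).1 hZ
      obtain ⟨hZE, C₁, C₂, hC₁, hC₂, hne, h₁, h₂⟩ := hZ'.prop
      -- by minimality, `e` lies on one of the two cycles
      by_cases he1 : e ∈ C₁
      · exact ⟨C₁, hC₁, he1, fun h => hfZ (h₁ h)⟩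
      by_cases he2 : e ∈ C₂
      · exact ⟨C₂, hC₂, he2, fun h => hfZ (h₂ h)⟩
      have hsub : Z \ {e} ⊆ Z := Set.sdiff_subset
      have hle := hZ'.le_of_le (y := Z \ {e})
        ⟨hsub.trans hZE, C₁, C₂, hC₁, hC₂, hne, Set.subset_sdiff_singleton h₁ he1,
          Set.subset_sdiff_singleton h₂ he2⟩ hsub
      exact absurd rfl (hle heZ).2
    · intro hB2
      have hBE : B ⊆ G.E := hE ▸ hB.subset_ground
      have hBfin : B.Finite := hfin.subset hB.subset_ground
      obtain ⟨Z, hZB, hZ⟩ := (hBfin.finite_subsets.subset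
        (s := {Y | Y ⊆ B}) subset_rfl).subset (t := {Y | Y ⊆ B ∧ (Y ⊆ G.E ∧ G.HasTwoCycles Y)})
        (fun _ h => h.1) |>.exists_le_minimal ⟨subset_rfl, hBE, hB2⟩
      have hZc : G.LiftCircuit Z :=
        ⟨hZ.prop.2, fun Y hY hYZ => hZ.le_of_le ⟨hYZ.trans hZB, hY⟩ hYZ⟩
      have hCd : Q.IsCircuit Z := (hG Z).2 hZc
      exact hCd.not_indep (hB.subset hZB)

/-! ### Matroid rank and connectivity -/

private lemma eRk_eq {α : Type u} (M : Matroid α) (X : Set α) : eRk M X = M.eRk X := by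
  apply le_antisymm
  · exact iSup_le fun I => I.2.1.encard_le_eRk_of_subset I.2.2
  · obtain ⟨I, hI⟩ := M.exists_isBasis' X
    rw [← hI.encard_eq_eRk]
    exact le_iSup (fun I : {I : Set α // M.Indep I ∧ I ⊆ X} => (I : Set α).encard)
      ⟨I, hI.indep, hI.subset⟩

private lemma eRank_eq {α : Type u} (M : Matroid α) : eRank M = M.eRank := by
  rw [eRank, eRk_eq, eRk_eq_eRank subset_rfl]

/-- In a 3-connected matroid on at least four elements, pairs are coindependent, and the
rank is finite. Infinite rank would make the inequality in the definition of a
2-separation vacuous. -/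
private lemma pair_coindep {α : Type u} (M : Matroid α) (h3 : ThreeConnected M)
    (h4 : 4 ≤ M.E.encard) {e f : α} (he : e ∈ M.E) (hf : f ∈ M.E) (hne : e ≠ f) :
    M.RankFinite ∧ M.Coindep {e, f} := by
  have hsub : ({e, f} : Set α) ⊆ M.E := by
    rintro x (rfl | rfl) <;> assumption
  have hadd := Set.encard_sdiff_add_encard_of_subset hsub
  rw [Set.encard_pair hne] at hadd
  have h2 : (2 : ℕ∞) ≤ (M.E \ {e, f}).encard := by
    rw [← hadd] at h4
    exact (ENat.add_le_add_iff_right (k := 2) (by simp)).1 (by simpa [two_add_two_eq_four] using h4)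
  have hno : ¬ (M.eRk {e, f} + M.eRk (M.E \ {e, f}) ≤ M.eRank + 1) := by
    intro hle
    refine h3.2 ⟨{e, f}, M.E \ {e, f}, Set.union_sdiff_cancel hsub, Set.disjoint_sdiff_right,
      ?_, by simpa using h2, ?_⟩
    · simp [Set.encard_pair hne]
    · simpa [eRk_eq, eRank_eq] using hle
  have hfin : M.RankFinite := by
    rw [← eRank_ne_top_iff]
    intro htop
    simp [htop] at hno
  refine ⟨hfin, ?_⟩
  rw [coindep_iff_compl_spanning hsub, spanning_iff_eRk_le Set.sdiff_subset]
  by_contra hlt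
  push Not at hlt
  apply hno
  have h1 : M.eRk {e, f} ≤ 2 := (M.eRk_le_encard _).trans (Set.encard_pair hne).le
  calc M.eRk {e, f} + M.eRk (M.E \ {e, f}) ≤ 2 + M.eRk (M.E \ {e, f}) := by gcongr
    _ = (M.eRk (M.E \ {e, f}) + 1) + 1 := by rw [add_comm, add_assoc, one_add_one_eq_two]
    _ ≤ M.eRank + 1 := by gcongr; exact Order.add_one_le_of_lt hlt

theorem statement_18 {α : Type u} (M : Matroid α) (h3 : ThreeConnected M)
    (hex : ExcludedMinorBL M) (hU : HasU24Minor M) (hcr : eRank M✶ ≤ 4) :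
    eRank M ≤ 9 := by
  rw [eRank_eq] at hcr ⊢
  by_contra hlt
  push Not at hlt
  have hr : (10 : ℕ∞) ≤ M.eRank := Order.add_one_le_of_lt hlt
  have hE10 : (10 : ℕ∞) ≤ M.E.encard := hr.trans M.eRank_le_encard_ground
  have h4 : (4 : ℕ∞) ≤ M.E.encard := le_trans (by norm_num) hE10
  obtain ⟨e₀, f₀, he₀, hf₀, hne₀⟩ := Set.one_lt_encard_iff.1
    (show 1 < M.E.encard from lt_of_lt_of_le (by norm_num) hE10)
  have hrf := (pair_coindep M h3 h4 he₀ hf₀ hne₀).1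
  have hEfin : M.E.Finite := by
    rw [← Set.encard_ne_top_iff, ← M.eRank_add_eRank_dual]
    have hd : M✶.eRank ≠ ⊤ := ne_top_of_le_ne_top (by simp) hcr
    exact WithTop.add_ne_top.2 ⟨M.eRank_ne_top_iff.2 hrf, hd⟩
  -- contract an arbitrary element
  set Q := del (con M {e₀}) ∅ with hQdef
  have hQE : Q.E = M.E \ {e₀} := by simp [hQdef, del, con]
  have hQdual : Q✶ = M✶ ↾ (M.E \ {e₀}) := by
    have h : Q = con M {e₀} := by
      rw [hQdef, del, Set.sdiff_empty, restrict_ground_eq_self]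
    rw [h, con, dual_dual, del, dual_ground]
  have hQM : Q ≠ M := by
    intro h
    rw [h] at hQE
    exact (hQE ▸ he₀ : e₀ ∈ M.E \ {e₀}).2 rfl
  have hQBL : InBL Q := hex.2 Q ⟨⟨{e₀}, ∅, rfl⟩, hQM⟩
  have hQfin : Q.E.Finite := hQE ▸ hEfin.subset Set.sdiff_subset
  have hsep : ∀ e ∈ Q.E, ∀ f ∈ Q.E, e ≠ f → ∃ C, Q.IsCircuit C ∧ e ∈ C ∧ f ∉ C := by
    intro e he f hf hne
    have hco : Q.Coindep {e, f} := by
      rw [hQE] at he hf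
      rw [coindep_def, hQdual, restrict_indep_iff]
      refine ⟨(pair_coindep M h3 h4 he.1 hf.1 hne).2, ?_⟩
      rintro x (rfl | rfl) <;> assumption
    obtain ⟨B, hB, hdisj⟩ := hco.exists_isBase_subset_compl
    have heB : e ∉ B := fun h => (hdisj h).2 (by simp)
    have hfB : f ∉ B := fun h => (hdisj h).2 (by simp)
    refine ⟨Q.fundCircuit e B, hB.fundCircuit_isCircuit he heB, Q.mem_fundCircuit e B, fun h => ?_⟩
    rcases Q.fundCircuit_subset_insert e B h with h | h
    · exact hne h.symm
    · exact hfB h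
  obtain ⟨B, hB⟩ := Q.exists_isBase
  have hK : (Q.E \ B).encard ≤ M✶.eRank := by
    have h1 := hB.compl_isBase_dual.indep
    rw [hQdual, restrict_indep_iff] at h1
    exact h1.1.encard_le_eRank
  have hBfin := hQfin.subset hB.subset_ground
  have hcardQ := Set.encard_sdiff_add_encard_of_subset hB.subset_ground
  have hcardM := Set.encard_sdiff_singleton_add_one he₀
  rw [← hQE, ← M.eRank_add_eRank_dual] at hcardM
  obtain ⟨r, hr'⟩ := ENat.ne_top_iff_exists.1 (M.eRank_ne_top_iff.2 hrf)
  obtain ⟨k, hk⟩ := ENat.ne_top_iff_exists.1 (ne_top_of_le_ne_top (by simp) hcr : M✶.eRank ≠ ⊤)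
  rw [← hcardQ] at hcardM
  rw [← hr'] at hr
  rw [← hk] at hcr hK
  rw [← hr', ← hk, ← (hQfin.subset Set.sdiff_subset).cast_ncard_eq, ← hBfin.cast_ncard_eq] at hcardM
  rw [← (hQfin.subset Set.sdiff_subset).cast_ncard_eq] at hK
  norm_cast at hcardM hK hr hcr
  have := base_bound Q hQfin hQBL hsep B hB.indep (by omega)
  omega

end BLFormal
end

section
/- Let M be a 3-connected excluded minor of \overline{BL} having a U_{2,4}-minor. Then M has no restriction isomorphic to U_{2,5}; that is, there is no 5-element subset X of E(M) with M|X isomorphic to U_{2,5}. -/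
/-!
Suppose that `M` is an excluded minor and that `X` is a five-element subset of `M.E` with
`M ↾ X` isomorphic to `U_{2,5}`.

For each `f ∈ X` the proper minor `M \ f` still contains the line `X \ {f}`, a copy of `U_{2,4}`,
so it is not graphic (`Graph.no_U24_cycles`) and therefore equals `L(G_f)` for some graph `G_f`.
In `L(G_f)` a four-point line consists of parallel edges, except that one of its elements may be a
loop; hence some three elements of `X \ {f}` have the same ends in `G_f`
(`Graph.exists_parallel_triple`). Exchanging two edges with the same ends is an automorphism of
`L(G_f)` (`Graph.LiftCircuit.swap`).

Fix `f ∈ X` and let `e, b` be two elements of `X \ {f}` with the same ends in `G_f`. Then `e` lies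
freely on the line `X`: if `e` is in the closure of a set `Z` not containing `e`, then `X` is in
the closure of `Z`. Indeed, either `Z` meets `X`, or a circuit `C ⊆ Z ∪ {e}` through `e` avoids
`f`, so that exchanging `e` and `b` shows that `b` is in the closure of `Z`; in both cases the
closure of `Z` contains two points of the line.

Now let `T` be three elements of `X \ {e}` with the same ends in `G_e`, and let `G` be obtained from
`G_e` by adding `e` as a further edge with these ends. The exchange automorphisms between `e` and
the elements of `T` show that `e` also lies freely on the line `X` with respect to the lift circuits
of `G`. Hence `M` and `G` have the same circuits, that is, `M = L(G)`, contradicting the assumption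
that `M` is not bicircular lift. The argument uses circuits and closures only, so `M` may be
infinite.
-/


open Set Matroid

universe u

namespace BLFormal

/-! ### Cycles and lift circuits of graphs -/

namespace Graph

variable {V : Type u} {α : Type u} {G H : Graph V α} {C D X : Set α}

/-- The cycles of a graph form an antichain. -/
lemma IsCycle.eq_of_subset (hC : G.IsCycle C) (hD : G.IsCycle D) (hCD : C ⊆ D) : C = D := by
  obtain ⟨-, -, ⟨c, hc⟩, hCdeg, -⟩ := hC
  obtain ⟨-, hDfin, -, hDdeg, hDconn⟩ := hD
  -- Degrees in `C` and `D` agree, so `C` contains every edge of `D` at a vertex of `C`.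
  have key : ∀ v ∈ G.vertsOf C, ∀ x ∈ D, v ∈ G.inc x → x ∈ C := by
    rintro v hv x hx hvx
    have hvD : v ∈ G.vertsOf D := by
      obtain ⟨y, hy, hvy⟩ := hv
      exact ⟨y, hCD hy, hvy⟩
    have h1 := hCdeg v hv
    have h2 := hDdeg v hvD
    unfold deg at h1 h2
    have hs1 : {e ∈ C | v ∈ G.inc e} ⊆ {e ∈ D | v ∈ G.inc e} := fun y hy => ⟨hCD hy.1, hy.2⟩
    have hs2 : {e ∈ C | G.inc e = Sym2.diag v} ⊆ {e ∈ D | G.inc e = Sym2.diag v} :=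
      fun y hy => ⟨hCD hy.1, hy.2⟩
    have hf1 : {e ∈ D | v ∈ G.inc e}.Finite := hDfin.subset (fun y hy => hy.1)
    have hf2 : {e ∈ D | G.inc e = Sym2.diag v}.Finite := hDfin.subset (fun y hy => hy.1)
    have hn1 := Set.ncard_le_ncard hs1 hf1
    have hn2 := Set.ncard_le_ncard hs2 hf2
    have heq := Set.eq_of_subset_of_ncard_le hs1 (by omega) hf1
    have hxm : x ∈ {e ∈ D | v ∈ G.inc e} := ⟨hx, hvx⟩
    rw [← heq] at hxm
    exact hxm.1
  obtain ⟨u, hu⟩ : ∃ u, u ∈ G.inc c := ⟨_, Sym2.out_fst_mem _⟩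
  have hreach : ∀ w, Relation.ReflTransGen (G.AdjOn D) u w → w ∈ G.vertsOf C := by
    intro w hw
    induction hw with
    | refl => exact ⟨c, hc, hu⟩
    | tail _ h ih =>
      obtain ⟨x, hx, hxe⟩ := h
      exact ⟨x, key _ ih x hx (by simp [hxe]), by simp [hxe]⟩
  refine hCD.antisymm fun x hx => ?_
  obtain ⟨w, hw⟩ : ∃ w, w ∈ G.inc x := ⟨_, Sym2.out_fst_mem _⟩
  exact key w (hreach w (hDconn u ⟨c, hCD hc, hu⟩ w ⟨x, hx, hw⟩)) x hx hw

lemma isCycle_singleton {x : α} {v : V} (hx : x ∈ G.E) (hv : G.inc x = Sym2.diag v) :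
    G.IsCycle {x} := by
  have hverts : ∀ u ∈ G.vertsOf {x}, u = v := by
    rintro u ⟨y, rfl, hu⟩
    rw [hv] at hu
    simpa [Sym2.diag] using hu
  refine ⟨by simpa using hx, Set.finite_singleton x, Set.singleton_nonempty x, ?_, ?_⟩
  · intro u hu
    obtain rfl := hverts u hu
    have h1 : {e ∈ ({x} : Set α) | u ∈ G.inc e} = {x} := by
      ext y
      simp only [Set.mem_ofPred_eq, Set.mem_singleton_iff, and_iff_left_iff_imp]
      rintro rfl
      simp [hv, Sym2.diag]
    have h2 : {e ∈ ({x} : Set α) | G.inc e = Sym2.diag u} = {x} := by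
      ext y
      simp only [Set.mem_ofPred_eq, Set.mem_singleton_iff, and_iff_left_iff_imp]
      rintro rfl
      exact hv
    rw [deg, h1, h2, Set.ncard_singleton]
  · intro u hu w hw
    rw [hverts u hu, hverts w hw]

/-- In a cycle without loops, every vertex is incident with exactly two edges. -/
lemma IsCycle.ncard_eq_two (hC : G.IsCycle C) (hloop : ∀ x ∈ C, ¬ G.IsCycle {x})
    {x : α} (hx : x ∈ C) {v : V} (hv : v ∈ G.inc x) : {e ∈ C | v ∈ G.inc e}.ncard = 2 := by
  have h := hC.2.2.2.1 v ⟨x, hx, hv⟩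
  have h0 : {e ∈ C | G.inc e = Sym2.diag v} = ∅ := by
    ext y
    simp only [Set.mem_ofPred_eq, Set.mem_empty_iff_false, iff_false, not_and]
    exact fun hy hyv => hloop y hy (isCycle_singleton (hC.1 hy) hyv)
  simpa [deg, h0] using h

/-- The two edges of a cycle of length two have the same ends. -/
lemma IsCycle.inc_eq_of_pair {x y : α} (hC : G.IsCycle {x, y}) (hxy : x ≠ y)
    (hloop : ∀ z ∈ ({x, y} : Set α), ¬ G.IsCycle {z}) : G.inc x = G.inc y := by
  have hmem : ∀ v, v ∈ G.inc x → v ∈ G.inc y := by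
    intro v hv
    by_contra hvy
    have h := hC.ncard_eq_two hloop (x := x) (by simp) hv
    have h1 : {e ∈ ({x, y} : Set α) | v ∈ G.inc e} = {x} := by
      ext z
      simp only [Set.mem_ofPred_eq, Set.mem_insert_iff, Set.mem_singleton_iff]
      constructor
      · rintro ⟨rfl | rfl, hz⟩
        · rfl
        · exact absurd hz hvy
      · rintro rfl
        exact ⟨Or.inl rfl, hv⟩
    rw [h1, Set.ncard_singleton] at h
    omega
  obtain ⟨u, v, huv⟩ : ∃ u v, G.inc x = s(u, v) := by
    induction h : G.inc x with
    | _ u v => exact ⟨u, v, rfl⟩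
  have hne : u ≠ v := by
    rintro rfl
    exact hloop x (by simp) (isCycle_singleton (hC.1 (by simp)) huv)
  rw [huv]
  exact (((Sym2.mem_and_mem_iff hne).1 ⟨hmem u (by simp [huv]), hmem v (by simp [huv])⟩)).symm

/-- Every vertex of a cycle of length three lies on exactly two of its edges. -/
lemma IsCycle.triangle_mem {x y z : α} (hC : G.IsCycle {x, y, z}) (hxy : x ≠ y) (hxz : x ≠ z)
    (hyz : y ≠ z) (hloop : ∀ w ∈ ({x, y, z} : Set α), ¬ G.IsCycle {w}) {v : V}
    (hv : v ∈ G.inc x) : v ∈ G.inc y ↔ v ∉ G.inc z := by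
  have h := hC.ncard_eq_two hloop (x := x) (by simp) hv
  by_cases hy : v ∈ G.inc y <;> by_cases hz : v ∈ G.inc z
  · have h1 : {e ∈ ({x, y, z} : Set α) | v ∈ G.inc e} = {x, y, z} := by
      ext w
      simp only [Set.mem_ofPred_eq, Set.mem_insert_iff, Set.mem_singleton_iff]
      grind
    rw [h1, Set.ncard_eq_three.2 ⟨x, y, z, hxy, hxz, hyz, rfl⟩] at h
    omega
  · simp [hy, hz]
  · simp [hy, hz]
  · have h1 : {e ∈ ({x, y, z} : Set α) | v ∈ G.inc e} = {x} := by
      ext w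
      simp only [Set.mem_ofPred_eq, Set.mem_insert_iff, Set.mem_singleton_iff]
      grind
    rw [h1, Set.ncard_singleton] at h
    omega

/-- The triples of a four-element set cannot all be cycles: cycle matroids have no restriction
isomorphic to `U_{2,4}`. -/
lemma no_U24_cycles {Y : Set α} (hY : Y.encard = 4)
    (hT : ∀ T ⊆ Y, T.encard = 3 → G.IsCycle T) : False := by
  obtain ⟨a, ha⟩ : Y.Nonempty := by
    rw [← Set.encard_ne_zero, hY]
    norm_num
  have hYa : (Y \ {a}).encard = 3 := by
    rw [Set.encard_sdiff_singleton_of_mem ha, hY]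
    rfl
  obtain ⟨b, c, d, hbc, hbd, hcd, hbcd⟩ := Set.encard_eq_three.1 hYa
  have hb : b ∈ Y \ {a} := by simp [hbcd]
  have hc : c ∈ Y \ {a} := by simp [hbcd]
  have hd : d ∈ Y \ {a} := by simp [hbcd]
  have hab : a ≠ b := fun h => hb.2 h.symm
  have hac : a ≠ c := fun h => hc.2 h.symm
  have had : a ≠ d := fun h => hd.2 h.symm
  have cyc : ∀ x ∈ Y, ∀ y ∈ Y, ∀ z ∈ Y, x ≠ y → x ≠ z → y ≠ z → G.IsCycle {x, y, z} := by
    intro x hx y hy z hz h1 h2 h3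
    refine hT _ ?_ (Set.encard_eq_three.2 ⟨x, y, z, h1, h2, h3, rfl⟩)
    rintro w (rfl | rfl | rfl) <;> assumption
  have noloop : ∀ x y z : α, x ≠ y → G.IsCycle {x, y, z} →
      ∀ w ∈ ({x, y, z} : Set α), ¬ G.IsCycle {w} := by
    intro x y z hxy h w hw hcw
    have heq := hcw.eq_of_subset h (by simpa using hw)
    have hx : x ∈ ({w} : Set α) := by simp [heq]
    have hy : y ∈ ({w} : Set α) := by simp [heq]
    simp only [Set.mem_singleton_iff] at hx hy
    exact hxy (hx.trans hy.symm)
  obtain ⟨v, hv⟩ : ∃ v, v ∈ G.inc a := ⟨_, Sym2.out_fst_mem _⟩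
  have h1 := cyc a ha b hb.1 c hc.1 hab hac hbc
  have h2 := cyc a ha b hb.1 d hd.1 hab had hbd
  have h3 := cyc a ha c hc.1 d hd.1 hac had hcd
  have e1 := h1.triangle_mem hab hac hbc (noloop _ _ _ hab h1) hv
  have e2 := h2.triangle_mem hab had hbd (noloop _ _ _ hab h2) hv
  have e3 := h3.triangle_mem hac had hcd (noloop _ _ _ hac h3) hv
  tauto

/-- If all triples of a four-element set are lift circuits, then three of the four edges have the
same ends. -/
lemma exists_parallel_triple {Y : Set α} (hY : Y.encard = 4)
    (hT : ∀ T ⊆ Y, T.encard = 3 → G.LiftCircuit T) :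
    ∃ T ⊆ Y, T.encard = 3 ∧ ∀ x ∈ T, ∀ y ∈ T, G.inc x = G.inc y := by
  have hdel : ∀ p ∈ Y, (Y \ {p}).encard = 3 := by
    intro p hp
    rw [Set.encard_sdiff_singleton_of_mem hp, hY]
    rfl
  -- Two loops would form a lift circuit properly contained in a triple.
  have hone : ∀ p ∈ Y, ∀ q ∈ Y, G.IsCycle {p} → G.IsCycle {q} → p = q := by
    intro p hp q hq hcp hcq
    by_contra hpq
    have h3 : (3 : ℕ∞) ≤ Y.encard := by rw [hY]; norm_num
    obtain ⟨T, hpqT, hTY, hT3⟩ := Set.exists_superset_subset_encard_eq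
      (s := {p, q}) (t := Y) (k := 3) (by rintro w (rfl | rfl) <;> assumption)
      (by rw [Set.encard_pair hpq]; norm_num) h3
    have hmin := (hT T hTY hT3).2 (y := {p, q})
      ⟨hpqT.trans (hT T hTY hT3).1.1, {p}, {q}, hcp, hcq,
        fun h => hpq (Set.singleton_injective h), by simp, by simp⟩ hpqT
    have := Set.encard_le_encard hmin
    rw [hT3, Set.encard_pair hpq] at this
    exact absurd this (by norm_num)
  obtain ⟨T, hTY, hT3, hTl⟩ : ∃ T ⊆ Y, T.encard = 3 ∧ ∀ x ∈ T, ¬ G.IsCycle {x} := by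
    by_cases hl : ∃ p ∈ Y, G.IsCycle {p}
    · obtain ⟨p, hp, hcp⟩ := hl
      exact ⟨Y \ {p}, Set.sdiff_subset, hdel p hp, fun x hx hcx => hx.2 (hone x hx.1 p hp hcx hcp)⟩
    · push Not at hl
      obtain ⟨p, hp⟩ : Y.Nonempty := by
        rw [← Set.encard_ne_zero, hY]
        norm_num
      exact ⟨Y \ {p}, Set.sdiff_subset, hdel p hp, fun x hx => hl x hx.1⟩
  refine ⟨T, hTY, hT3, ?_⟩
  obtain ⟨-, C₁, C₂, h1, h2, hne, hs1, hs2⟩ := (hT T hTY hT3).1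
  have hTfin : T.Finite := Set.finite_of_encard_eq_coe (k := 3) hT3
  have hTn : T.ncard = 3 := by rw [Set.ncard_def, hT3]; rfl
  -- By the antichain property neither cycle is all of `T`; being no loops, both have length two.
  have hsize : ∀ C, G.IsCycle C → C ⊆ T → (∃ D, G.IsCycle D ∧ D ⊆ T ∧ D ≠ C) → C.ncard = 2 := by
    rintro C hC hCT ⟨D, hD, hDT, hDC⟩
    have hle := Set.ncard_le_ncard hCT hTfin
    have h0 : C.ncard ≠ 0 := by
      rw [Ne, Set.ncard_eq_zero hC.2.1]
      exact hC.2.2.1.ne_empty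
    have h1 : C.ncard ≠ 1 := by
      rw [Ne, Set.ncard_eq_one]
      rintro ⟨x, rfl⟩
      exact hTl x (hCT rfl) hC
    have h3 : C.ncard ≠ 3 := by
      intro h3
      have hCe : C = T := Set.eq_of_subset_of_ncard_le hCT (by omega) hTfin
      exact hDC (hD.eq_of_subset hC (hCe ▸ hDT))
    omega
  have hp1 := hsize C₁ h1 hs1 ⟨C₂, h2, hs2, hne.symm⟩
  have hp2 := hsize C₂ h2 hs2 ⟨C₁, h1, hs1, hne⟩
  obtain ⟨x, y, hxy, rfl⟩ := Set.ncard_eq_two.1 hp1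
  obtain ⟨z, w, hzw, rfl⟩ := Set.ncard_eq_two.1 hp2
  have i1 := h1.inc_eq_of_pair hxy fun t ht => hTl t (hs1 ht)
  have i2 := h2.inc_eq_of_pair hzw fun t ht => hTl t (hs2 ht)
  obtain ⟨a, b, c, hab, hac, hbc, rfl⟩ := Set.encard_eq_three.1 hT3
  have hx := hs1 (show x ∈ ({x, y} : Set α) by simp)
  have hy := hs1 (show y ∈ ({x, y} : Set α) by simp)
  have hz := hs2 (show z ∈ ({z, w} : Set α) by simp)
  have hw := hs2 (show w ∈ ({z, w} : Set α) by simp)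
  have hne1 : ¬ (x = z ∧ y = w) := by rintro ⟨rfl, rfl⟩; exact hne rfl
  have hne2 : ¬ (x = w ∧ y = z) := by rintro ⟨rfl, rfl⟩; exact hne (Set.pair_comm _ _)
  clear hone hTl hsize hdel hT h1 h2 hs1 hs2 hne hp1 hp2
  simp only [Set.mem_insert_iff, Set.mem_singleton_iff] at hx hy hz hw
  have key : G.inc a = G.inc b ∧ G.inc b = G.inc c := by
    rcases hx with rfl | rfl | rfl <;> rcases hy with rfl | rfl | rfl <;>
      rcases hz with rfl | rfl | rfl <;> rcases hw with rfl | rfl | rfl <;> simp_all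
  rintro p (rfl | rfl | rfl) q (rfl | rfl | rfl) <;> simp [key.1, key.2]

/-- A renaming of edges that preserves membership and ends maps cycles to cycles. -/
lemma IsCycle.image (σ : Equiv.Perm α) (hC : G.IsCycle C) (hE : ∀ x ∈ C, x ∈ G.E → σ x ∈ H.E)
    (hinc : ∀ x ∈ C, H.inc (σ x) = G.inc x) : H.IsCycle (σ '' C) := by
  obtain ⟨hCE, hfin, hne, hdeg, hconn⟩ := hC
  have hsep : ∀ P : Sym2 V → Prop,
      {e ∈ σ '' C | P (H.inc e)} = σ '' {e ∈ C | P (G.inc e)} := by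
    intro P
    ext y
    constructor
    · rintro ⟨⟨x, hx, rfl⟩, hP⟩
      exact ⟨x, ⟨hx, hinc x hx ▸ hP⟩, rfl⟩
    · rintro ⟨x, ⟨hx, hP⟩, rfl⟩
      exact ⟨⟨x, hx, rfl⟩, (hinc x hx).symm ▸ hP⟩
  have hverts : ∀ v, v ∈ H.vertsOf (σ '' C) → v ∈ G.vertsOf C := by
    rintro v ⟨_, ⟨x, hx, rfl⟩, hv⟩
    exact ⟨x, hx, hinc x hx ▸ hv⟩
  refine ⟨?_, hfin.image σ, hne.image σ, ?_, ?_⟩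
  · rintro _ ⟨x, hx, rfl⟩
    exact hE x hx (hCE hx)
  · intro v hv
    rw [← hdeg v (hverts v hv), deg, deg, hsep (fun s => v ∈ s), hsep (fun s => s = Sym2.diag v),
      Set.ncard_image_of_injective _ σ.injective, Set.ncard_image_of_injective _ σ.injective]
  · intro u hu v hv
    refine Relation.ReflTransGen.mono (r := G.AdjOn C) ?_ u v (hconn u (hverts u hu) v (hverts v hv))
    rintro a b ⟨x, hx, hxe⟩
    exact ⟨σ x, ⟨x, hx, rfl⟩, (hinc x hx).trans hxe⟩

lemma HasTwoCycles.image (σ : Equiv.Perm α) (hX : G.HasTwoCycles X)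
    (hE : ∀ x ∈ X, x ∈ G.E → σ x ∈ H.E) (hinc : ∀ x ∈ X, H.inc (σ x) = G.inc x) :
    H.HasTwoCycles (σ '' X) := by
  obtain ⟨C₁, C₂, h1, h2, hne, hs1, hs2⟩ := hX
  exact ⟨σ '' C₁, σ '' C₂,
    h1.image σ (fun x hx => hE x (hs1 hx)) (fun x hx => hinc x (hs1 hx)),
    h2.image σ (fun x hx => hE x (hs2 hx)) (fun x hx => hinc x (hs2 hx)),
    fun h => hne (Set.image_injective.2 σ.injective h),
    Set.image_mono hs1, Set.image_mono hs2⟩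

lemma LiftCircuit.image (σ : Equiv.Perm α) (hX : G.LiftCircuit X)
    (hE : ∀ x ∈ X, (x ∈ G.E ↔ σ x ∈ H.E)) (hinc : ∀ x ∈ X, H.inc (σ x) = G.inc x) :
    H.LiftCircuit (σ '' X) := by
  refine ⟨⟨?_, hX.1.2.image σ (fun x hx => (hE x hx).1) hinc⟩, ?_⟩
  · rintro _ ⟨x, hx, rfl⟩
    exact (hE x hx).1 (hX.1.1 hx)
  · rintro Y ⟨-, hY2⟩ hYX
    have hsub : σ.symm '' Y ⊆ X := by
      rintro _ ⟨y, hy, rfl⟩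
      obtain ⟨x, hx, rfl⟩ := hYX hy
      simpa using hx
    have h2 : G.HasTwoCycles (σ.symm '' Y) := by
      refine hY2.image σ.symm ?_ ?_
      · intro y hy hyE
        have hm := hsub ⟨y, hy, rfl⟩
        exact (hE _ hm).2 (by simpa using hyE)
      · intro y hy
        have hm := hsub ⟨y, hy, rfl⟩
        simpa using (hinc _ hm).symm
    have h3 := hX.2 ⟨hsub.trans hX.1.1, h2⟩ hsub
    rintro _ ⟨x, hx, rfl⟩
    obtain ⟨y, hy, hyx⟩ := h3 hx
    rw [← hyx]
    simpa using hy

/-- Exchanging two edges with the same ends preserves lift circuits. -/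
lemma LiftCircuit.swap {a b : α} (hX : G.LiftCircuit X) (ha : a ∈ G.E) (hb : b ∈ G.E)
    (hab : G.inc a = G.inc b) (haX : a ∈ X) (hbX : b ∉ X) :
    G.LiftCircuit (insert b (X \ {a})) := by
  classical
  have him : Equiv.swap a b '' X = insert b (X \ {a}) := by
    ext y
    simp only [Set.mem_image, Set.mem_insert_iff, Set.mem_sdiff, Set.mem_singleton_iff]
    constructor
    · rintro ⟨x, hx, rfl⟩
      by_cases hxa : x = a
      · simp [hxa]
      · have hxb : x ≠ b := by rintro rfl; exact hbX hx
        right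
        rw [Equiv.swap_apply_of_ne_of_ne hxa hxb]
        exact ⟨hx, hxa⟩
    · rintro (rfl | ⟨hy, hya⟩)
      · exact ⟨a, haX, by simp⟩
      · have hyb : y ≠ b := by rintro rfl; exact hbX hy
        exact ⟨y, hy, Equiv.swap_apply_of_ne_of_ne hya hyb⟩
  rw [← him]
  have hcases : ∀ x ∈ X, x = a ∨ Equiv.swap a b x = x := by
    intro x hx
    by_cases hxa : x = a
    · exact Or.inl hxa
    · exact Or.inr (Equiv.swap_apply_of_ne_of_ne hxa (by rintro rfl; exact hbX hx))
  refine hX.image _ ?_ ?_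
  · intro x hx
    rcases hcases x hx with rfl | h
    · simp [ha, hb]
    · rw [h]
  · intro x hx
    rcases hcases x hx with rfl | h
    · simpa using hab.symm
    · rw [h]

/-- Whether an edge set is a lift circuit depends only on the incidences of its own edges. -/
lemma LiftCircuit.congr (hX : G.LiftCircuit X) (hE : ∀ x ∈ X, (x ∈ G.E ↔ x ∈ H.E))
    (hinc : ∀ x ∈ X, H.inc x = G.inc x) : H.LiftCircuit X := by
  simpa using hX.image (H := H) (Equiv.refl α) (by simpa using hE) (by simpa using hinc)

end Graph

/-! ### Lines in excluded minors -/

lemma circuit_del_iff {α : Type u} {M : Matroid α} {e : α} {C : Set α} :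
    Circuit (del M {e}) C ↔ M.IsCircuit C ∧ e ∉ C := by
  unfold del Circuit
  rw [← isCircuit_def, restrict_isCircuit_iff Set.sdiff_subset]
  refine and_congr_right fun hC => ⟨fun h he => (h he).2 rfl, fun h x hx => ?_⟩
  exact ⟨hC.subset_ground hx, by rintro rfl; exact h hx⟩

/-- Deleting a point `f` of a `U_{2,5}`-restriction of an excluded minor leaves a bicircular lift
matroid, in whose graph three of the remaining points have the same ends. -/
lemma ExcludedMinorBL.exists_graph_del {α : Type u} {M : Matroid α} (hex : ExcludedMinorBL M)
    {X : Set α} (hXE : X ⊆ M.E) (hX5 : X.encard = 5)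
    (hX : ∀ T ⊆ X, T.encard = 3 → M.IsCircuit T) {f : α} (hf : f ∈ X) :
    ∃ (V : Type u) (G : Graph V α), IsLiftRep G (del M {f}) ∧
      ∃ T ⊆ X \ {f}, T.encard = 3 ∧ ∀ x ∈ T, ∀ y ∈ T, G.inc x = G.inc y := by
  have hcon : con M ∅ = M := by
    rw [con, del, Set.sdiff_empty, restrict_ground_eq_self, dual_dual]
  have hstrict : IsStrictMinor (del M {f}) M := by
    refine ⟨⟨∅, {f}, by rw [hcon]⟩, fun h => ?_⟩
    have hfE : f ∈ (del M {f}).E := by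
      rw [h]
      exact hXE hf
    exact hfE.2 rfl
  have hY : (X \ {f}).encard = 4 := by
    rw [Set.encard_sdiff_singleton_of_mem hf, hX5]
    rfl
  have hT : ∀ T ⊆ X \ {f}, T.encard = 3 → Circuit (del M {f}) T := fun T hT hT3 =>
    circuit_del_iff.2 ⟨hX T (hT.trans Set.sdiff_subset) hT3, fun hfT => (hT hfT).2 rfl⟩
  rcases hex.2 _ hstrict with ⟨V, G, hG⟩ | ⟨V, G, hG⟩
  · exact (G.no_U24_cycles hY fun T h h3 => (hG.2 T).1 (hT T h h3)).elim
  · exact ⟨V, G, hG, G.exists_parallel_triple hY fun T h h3 => (hG.2 T).1 (hT T h h3)⟩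

/-- A flat containing two points of a line contains the line. -/
lemma line_subset_closure {α : Type u} {M : Matroid α} {X Z : Set α}
    (hX : ∀ T ⊆ X, T.encard = 3 → M.IsCircuit T) {a b : α} (ha : a ∈ X) (hb : b ∈ X) (hab : a ≠ b)
    (haZ : a ∈ M.closure Z) (hbZ : b ∈ M.closure Z) : X ⊆ M.closure Z := by
  intro c hc
  by_cases hca : c = a
  · rwa [hca]
  by_cases hcb : c = b
  · rwa [hcb]
  have hC : M.IsCircuit {c, a, b} := by
    refine hX _ ?_ (Set.encard_eq_three.2 ⟨c, a, b, hca, hcb, hab, rfl⟩)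
    rintro w (rfl | rfl | rfl) <;> assumption
  have h1 : c ∈ M.closure {a, b} := by
    rw [mem_closure_iff_exists_isCircuit (by simp [hca, hcb])]
    exact ⟨_, subset_rfl, hC, by simp⟩
  refine M.closure_subset_closure_of_subset_closure ?_ h1
  rintro w (rfl | rfl) <;> assumption

/-- An excluded minor with a `U_{2,5}`-restriction would be bicircular lift. -/
lemma ExcludedMinorBL.false_of_line {α : Type u} {M : Matroid α} (hex : ExcludedMinorBL M)
    {X : Set α} (hXE : X ⊆ M.E) (hX5 : X.encard = 5)
    (hX : ∀ T ⊆ X, T.encard = 3 → M.IsCircuit T) : False := by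
  classical
  obtain ⟨f, hf⟩ : X.Nonempty := by
    rw [← Set.encard_ne_zero, hX5]
    norm_num
  obtain ⟨Vf, Gf, hGf, S, hSX, hS3, hS⟩ := hex.exists_graph_del hXE hX5 hX hf
  obtain ⟨e, b, c, heb, -, -, hSeq⟩ := Set.encard_eq_three.1 hS3
  have heS : e ∈ S := by simp [hSeq]
  have hbS : b ∈ S := by simp [hSeq]
  have heX : e ∈ X := (hSX heS).1
  have hbX : b ∈ X := (hSX hbS).1
  obtain ⟨V, G', hG', T, hTX, hT3, hT⟩ := hex.exists_graph_del hXE hX5 hX heX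
  obtain ⟨t₁, t₂, t₃, h12, h13, h23, hTeq⟩ := Set.encard_eq_three.1 hT3
  have ht1 : t₁ ∈ T := by simp [hTeq]
  have ht2 : t₂ ∈ T := by simp [hTeq]
  have ht3 : t₃ ∈ T := by simp [hTeq]
  -- The point `e` is freely placed on the line `X` in `M`.
  have hA : ∀ C, M.IsCircuit C → e ∈ C → X ⊆ M.closure (C \ {e}) := by
    intro C hC heC
    have hecl := hC.mem_closure_sdiff_singleton_of_mem heC
    by_cases hmeet : ∃ a ∈ X, a ∈ C ∧ a ≠ e
    · obtain ⟨a, haX, haC, hae⟩ := hmeet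
      exact line_subset_closure hX heX haX hae.symm hecl
        (M.mem_closure_of_mem' ⟨haC, hae⟩ (hXE haX))
    push Not at hmeet
    have hfC : f ∉ C := fun h => (hSX heS).2 (hmeet f hf h).symm
    have hbC : b ∉ C := fun h => heb (hmeet b hbX h).symm
    have hmemE : ∀ x ∈ S, x ∈ Gf.E := by
      intro x hx
      rw [← hGf.1]
      exact ⟨hXE (hSX hx).1, (hSX hx).2⟩
    have h1 : Gf.LiftCircuit C := (hGf.2 C).1 (circuit_del_iff.2 ⟨hC, hfC⟩)
    have h2 := h1.swap (hmemE e heS) (hmemE b hbS) (hS e heS b hbS) heC hbC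
    have h3 := (circuit_del_iff.1 ((hGf.2 _).2 h2)).1
    have hbcl : b ∈ M.closure (C \ {e}) := by
      rw [mem_closure_iff_exists_isCircuit (fun h => hbC h.1)]
      exact ⟨_, subset_rfl, h3, by simp⟩
    exact line_subset_closure hX heX hbX heb hecl hbcl
  -- The candidate graph: `e` is added to the graph of `M \ e` alongside the edges of `T`.
  let G : Graph V α := ⟨M.E, Function.update G'.inc e (G'.inc t₁)⟩
  have hTe : ∀ t ∈ T, t ≠ e := fun t ht => (hTX ht).2
  have hTE : ∀ t ∈ T, t ∈ M.E := fun t ht => hXE (hTX ht).1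
  have hincT : ∀ t ∈ T, G.inc e = G.inc t := by
    intro t ht
    simp only [G, Function.update_self, Function.update_of_ne (hTe t ht)]
    exact hT _ ht1 _ ht
  have hF : ∀ C, e ∉ C → (M.IsCircuit C ↔ G.LiftCircuit C) := by
    intro C heC
    have hE : ∀ x ∈ C, (x ∈ G.E ↔ x ∈ G'.E) := by
      intro x hx
      have hxe : x ≠ e := by rintro rfl; exact heC hx
      rw [← hG'.1]
      exact ⟨fun h => ⟨h, hxe⟩, fun h => h.1⟩
    have hinc : ∀ x ∈ C, G.inc x = G'.inc x := by
      intro x hx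
      have hxe : x ≠ e := by rintro rfl; exact heC hx
      exact Function.update_of_ne hxe _ _
    calc M.IsCircuit C ↔ Circuit (del M {e}) C := by simp [circuit_del_iff, heC]
      _ ↔ G'.LiftCircuit C := hG'.2 C
      _ ↔ G.LiftCircuit C := ⟨fun h => h.congr (fun x hx => (hE x hx).symm) hinc,
          fun h => h.congr hE fun x hx => (hinc x hx).symm⟩
  -- The edge `e` is freely placed on the line `X` with respect to the lift circuits of `G`.
  have hB : ∀ C, G.LiftCircuit C → e ∈ C → X ⊆ M.closure (C \ {e}) := by
    intro C hC heC
    have hmem : ∀ t ∈ T, t ∈ M.closure (C \ {e}) := by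
      intro t ht
      by_cases htC : t ∈ C
      · exact M.mem_closure_of_mem' ⟨htC, hTe t ht⟩ (hTE t ht)
      · rw [mem_closure_iff_exists_isCircuit (fun h => htC h.1)]
        refine ⟨insert t (C \ {e}), subset_rfl, (hF _ ?_).2 ?_, by simp⟩
        · simp [(hTe t ht).symm]
        · exact hC.swap (hXE heX) (hTE t ht) (hincT t ht) heC htC
    exact line_subset_closure hX (hTX ht1).1 (hTX ht2).1 h12 (hmem _ ht1) (hmem _ ht2)
  have hswap : ∀ C t, t ∈ T → M.IsCircuit C → t ∈ C → e ∉ C →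
      G.LiftCircuit (insert e (C \ {t})) := fun C t ht hC htC heC =>
    ((hF C heC).1 hC).swap (hTE t ht) (hXE heX) (hincT t ht).symm htC heC
  have hD : ∀ Z, e ∉ Z → X ⊆ M.closure Z → ∃ D, G.LiftCircuit D ∧ e ∈ D ∧ D ⊆ insert e Z := by
    intro Z heZ hXZ
    by_cases hall : ∃ t ∈ T, t ∉ Z
    · obtain ⟨t, ht, htZ⟩ := hall
      obtain ⟨C, hCs, hC, htC⟩ := exists_isCircuit_of_mem_closure (hXZ (hTX ht).1) htZ
      have heC : e ∉ C := fun h => (hCs h).elim (fun h' => hTe t ht h'.symm) heZ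
      refine ⟨_, hswap C t ht hC htC heC, by simp, Set.insert_subset_insert ?_⟩
      exact fun x hx => (hCs hx.1).resolve_left hx.2
    · push Not at hall
      -- With `T ⊆ Z`, the triple `{e, t₂, t₃}` is a lift circuit of `G`.
      have hTc : M.IsCircuit T := hX T (hTX.trans Set.sdiff_subset) hT3
      refine ⟨_, hswap T t₁ ht1 hTc ht1 (fun h => hTe e h rfl), by simp,
        Set.insert_subset_insert fun x hx => hall x hx.1⟩
  refine hex.1 (Or.inr ⟨V, G, rfl, fun C => ?_⟩)
  change M.IsCircuit C ↔ G.LiftCircuit C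
  by_cases heC : e ∈ C
  swap
  · exact hF C heC
  have hMtoG : ∀ C, M.IsCircuit C → e ∈ C → ∃ D ⊆ C, G.LiftCircuit D ∧ e ∈ D := by
    intro C hC heC
    obtain ⟨D, hD, heD, hDs⟩ := hD (C \ {e}) (by simp) (hA C hC heC)
    exact ⟨D, by rwa [Set.insert_sdiff_singleton, Set.insert_eq_of_mem heC] at hDs, hD, heD⟩
  have hGtoM : ∀ C, G.LiftCircuit C → e ∈ C → ∃ D ⊆ C, M.IsCircuit D ∧ e ∈ D := by
    intro C hC heC
    obtain ⟨D, hDs, hD, heD⟩ := exists_isCircuit_of_mem_closure (hB C hC heC heX)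
      (show e ∉ C \ {e} by simp)
    exact ⟨D, by rwa [Set.insert_sdiff_singleton, Set.insert_eq_of_mem heC] at hDs, hD, heD⟩
  constructor
  · intro hC
    obtain ⟨D, hDC, hD, heD⟩ := hMtoG C hC heC
    obtain ⟨C', hC'D, hC', -⟩ := hGtoM D hD heD
    have hCC' : C ⊆ C' := hC.2 hC'.1 (hC'D.trans hDC)
    rwa [← hDC.antisymm (hCC'.trans hC'D)]
  · intro hC
    obtain ⟨D, hDC, hD, heD⟩ := hGtoM C hC heC
    obtain ⟨C', hC'D, hC', -⟩ := hMtoG D hD heD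
    have hCC' : C ⊆ C' := hC.2 hC'.1 (hC'D.trans hDC)
    rwa [← hDC.antisymm (hCC'.trans hC'D)]

theorem statement_19 {α : Type u} (M : Matroid α) (h3 : ThreeConnected M)
    (hex : ExcludedMinorBL M) (hU : HasU24Minor M) :
    ¬ ∃ X ⊆ M.E, X.encard = 5 ∧ IsUnif 2 5 (M ↾ X) := by
  rintro ⟨X, hXE, hX5, -, hcirc⟩
  refine hex.false_of_line hXE hX5 fun T hTX hT3 => ?_
  have hT : (M ↾ X).IsCircuit T := (hcirc T).2 ⟨hTX, by rw [hT3]; norm_num⟩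
  exact ((restrict_isCircuit_iff hXE).1 hT).1

end BLFormal
end
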